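/- Let n, m be integers with 2 ≤ n < |m| and let G be the subgroup of BS(n,m) generated by a and b⁻¹ab. Then for every element γ of BS(n,m) that does not belong to the set {a^{nk} : k ∈ ℤ}, the set of conjugates {g γ g⁻¹ : g ∈ G} is infinite. -/

import Mathlib

/-- The single relator `b a^n b⁻¹ a^{-m}` of the Baumslag–Solitar group `BS(n,m)`. -/
def BSRels (n m : ℤ) : Set (FreeGroup Bool) :=
  {FreeGroup.of true * FreeGroup.of false ^ n * (FreeGroup.of true)⁻¹ *
    FreeGroup.of false ^ (-m)}

/-- The Baumslag–Solitar group `BS(n,m) = ⟨a, b ∣ b a^n b⁻¹ = a^m⟩`. -/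
abbrev BS (n m : ℤ) := PresentedGroup (BSRels n m)

/-- The canonical generator `a` of `BS(n,m)`. -/
def BS.a (n m : ℤ) : BS n m := PresentedGroup.of false

/-- The canonical generator `b` of `BS(n,m)`. -/
def BS.b (n m : ℤ) : BS n m := PresentedGroup.of true

open HNNExtension Multiplicative

/-! `BS(n, m)` is the HNN extension of `ℤ` that identifies `A = nℤ` with `B = mℤ`, with stable
letter `t = b`. By Britton's lemma, all reduced words for an element of an HNN extension have the
same number of letters `t^±1`. Conjugating a reduced word `t⁻¹ ⋯ t` by `t⁻¹ c t a` with `c ∉ B` and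
`a ∉ A` gives a reduced word `t⁻¹ ⋯ t` with four more of them, so an element with such a conjugate
has infinitely many. Every `γ ∉ A` can be brought to this form: the only obstruction is a word
`t⁻¹ ⋯ t k`, where both ends must be kept from cancelling at once, and this takes an element lying
outside two cosets of `A` or of `B`, which is there as soon as one of the indices is not `2`. -/

section Subgroup

variable {K : Type*} [Group K] {H : Subgroup K}

theorem exists_notMem_mul_notMem (hH : H ≠ ⊤) {p : K} (hp : H.index ≠ 2 ∨ p ∈ H) :
    ∃ s, s ∉ H ∧ s * p ∉ H := by
  by_cases hpH : p ∈ H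
  · obtain ⟨s, hs⟩ := SetLike.exists_not_mem_of_ne_top H hH rfl
    exact ⟨s, hs, by rwa [H.mul_mem_cancel_right hpH]⟩
  · have hindex := hp.resolve_right hpH
    rw [Ne, Subgroup.index_eq_two_iff_exists_notMem_and] at hindex
    push Not at hindex
    obtain ⟨s, hsp, hs⟩ := hindex p hpH
    exact ⟨s, hs, hsp⟩

end Subgroup

section HNNExtension

variable {K : Type*} [Group K] {A B : Subgroup K} {φ : A ≃* B}

/-- `IsBrittonReduced φ e f n x` says that `x` is the value of a Britton-reduced word
`t^e k₁ t^e₂ k₂ ⋯ t^f` with `n` stable letters, which begins with the letter `t^e` and ends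
with the letter `t^f`. The elements of the base group before and after these letters are not part
of the word, so that words can be concatenated around an element of the base group. -/
inductive IsBrittonReduced (φ : A ≃* B) : ℤˣ → ℤˣ → ℕ → HNNExtension K A B φ → Prop
  | t_zpow (e : ℤˣ) : IsBrittonReduced φ e e 1 (t ^ (e : ℤ))
  | t_zpow_mul {e f g : ℤˣ} {n : ℕ} {x : HNNExtension K A B φ} {k : K}
      (hk : k ∈ toSubgroup A B e → e = f) (hx : IsBrittonReduced φ f g n x) :
      IsBrittonReduced φ e g (n + 1) (t ^ (e : ℤ) * of k * x)

namespace IsBrittonReduced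

variable {e e' f f' : ℤˣ} {n n' : ℕ} {x y : HNNExtension K A B φ} {c k : K}

theorem mul_of_mul (hx : IsBrittonReduced φ e f n x) (hk : k ∈ toSubgroup A B f → f = e')
    (hy : IsBrittonReduced φ e' f' n' y) :
    IsBrittonReduced φ e f' (n + n') (x * of k * y) := by
  induction hx with
  | t_zpow e => simpa only [add_comm] using t_zpow_mul hk hy
  | t_zpow_mul hk' _ ih => simpa only [mul_assoc, add_right_comm] using t_zpow_mul hk' (ih hk)

theorem exists_isChain (hx : IsBrittonReduced φ e f n x) :
    ∃ l : List (ℤˣ × K), l.IsChain (fun u v ↦ u.2 ∈ toSubgroup A B u.1 → u.1 = v.1) ∧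
      (l.map fun u ↦ t ^ (u.1 : ℤ) * of u.2).prod = x ∧ l.length = n ∧
      ∀ u ∈ l.head?, u.1 = e := by
  induction hx with
  | t_zpow e => exact ⟨[(e, 1)], by simp⟩
  | @t_zpow_mul e f _ _ _ k hk _ ih =>
    obtain ⟨l, hl, rfl, rfl, hhead⟩ := ih
    refine ⟨(e, k) :: l, List.isChain_cons.2 ⟨fun u hu hmem ↦ ?_, hl⟩, by simp⟩
    rw [hhead u hu, hk hmem]

theorem length_unique (hx : IsBrittonReduced φ e f n x) (hx' : IsBrittonReduced φ e' f' n' x) :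
    n = n' := by
  obtain ⟨l, hl, hprod, rfl, -⟩ := hx.exists_isChain
  obtain ⟨l', hl', hprod', rfl, -⟩ := hx'.exists_isChain
  have hsigns := (ReducedWord.map_fst_eq_and_of_prod_eq φ (w₁ := ⟨1, l, hl⟩) (w₂ := ⟨1, l', hl'⟩)
    (by simp only [NormalWord.ReducedWord.prod, hprod, hprod'])).1
  simpa using congrArg List.length hsigns

theorem exists_eq_of_ne (hx : IsBrittonReduced φ e f n x) (hef : e ≠ f) :
    ∃ (e' : ℤˣ) (n' : ℕ) (k : K) (y : HNNExtension K A B φ),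
      (k ∈ toSubgroup A B e → e = e') ∧ IsBrittonReduced φ e' f n' y ∧
        x = t ^ (e : ℤ) * of k * y := by
  cases hx with
  | t_zpow => exact absurd rfl hef
  | t_zpow_mul hk hy => exact ⟨_, _, _, _, hk, hy, rfl⟩

theorem inv_t_mul_of_mul_t (hc : c ∉ B) :
    IsBrittonReduced φ (-1) 1 2 (t⁻¹ * of c * t) := by
  have hc' : c ∉ toSubgroup A B (-1) := hc
  simpa using t_zpow_mul (fun h ↦ absurd h hc') (t_zpow (φ := φ) 1)

theorem mul_of_mul_inv (hx : IsBrittonReduced φ e f n x) (hk : k ∈ toSubgroup A B f → f = -1)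
    (hc : c ∉ B) : IsBrittonReduced φ e 1 (n + 2) (x * of k * (t⁻¹ * of c * t)⁻¹) := by
  have hc' : c⁻¹ ∉ B := inv_mem_iff.not.2 hc
  simpa [mul_assoc] using hx.mul_of_mul hk (inv_t_mul_of_mul_t hc')

theorem conj (hx : IsBrittonReduced φ e f n x) (hc : c ∉ B) {s : K} (hs : s ∈ A → e = 1)
    (hk : k * s⁻¹ ∈ toSubgroup A B f → f = -1) :
    IsBrittonReduced φ (-1) 1 (n + 4)
      (t⁻¹ * of c * t * of s * (x * of k) * (t⁻¹ * of c * t * of s)⁻¹) := by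
  have hleft := (inv_t_mul_of_mul_t hc).mul_of_mul (fun h ↦ (hs h).symm) hx
  convert hleft.mul_of_mul_inv hk hc using 1
  · omega
  · simp only [map_mul, map_inv]
    group

theorem conj_pow {a : K} (hx : IsBrittonReduced φ (-1) 1 n x) (ha : a ∉ A) (hc : c ∉ B) (j : ℕ) :
    IsBrittonReduced φ (-1) 1 (n + 4 * j)
      ((t⁻¹ * of c * t * of a) ^ j * x * ((t⁻¹ * of c * t * of a) ^ j)⁻¹) := by
  induction j with
  | zero => simpa using hx
  | succ j ih =>
    have hstep := ih.conj (k := 1) (s := a) hc (fun h ↦ absurd h ha)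
      (fun h ↦ absurd h (by simpa using ha))
    simpa only [map_one, mul_one, pow_succ', mul_inv_rev, mul_assoc, add_assoc, mul_add] using hstep

end IsBrittonReduced

theorem exists_isBrittonReduced_of_isChain (e : ℤˣ) (k : K) (l : List (ℤˣ × K))
    (hl : ((e, k) :: l).IsChain (fun u v ↦ u.2 ∈ toSubgroup A B u.1 → u.1 = v.1)) :
    ∃ (f : ℤˣ) (n : ℕ) (y : HNNExtension K A B φ) (k' : K), IsBrittonReduced φ e f n y ∧
      (((e, k) :: l).map fun u ↦ t ^ (u.1 : ℤ) * of u.2).prod = y * of k' := by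
  induction l generalizing e k with
  | nil => exact ⟨e, 1, _, k, .t_zpow e, by simp⟩
  | cons u l ih =>
    obtain ⟨hk, hl⟩ := List.isChain_cons_cons.1 hl
    obtain ⟨f, n, y, k', hy, hprod⟩ := ih u.1 u.2 hl
    exact ⟨f, n + 1, _, k', .t_zpow_mul hk hy, by rw [List.map_cons, List.prod_cons, hprod]; group⟩

theorem mem_range_of_or_exists_isBrittonReduced (x : HNNExtension K A B φ) :
    (∃ k, x = of k) ∨ ∃ (h k : K) (e f : ℤˣ) (n : ℕ) (y : HNNExtension K A B φ),
      IsBrittonReduced φ e f n y ∧ x = of h * (y * of k) := by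
  obtain ⟨d⟩ := NormalWord.TransversalPair.nonempty K A B
  obtain ⟨⟨⟨h, l, hl⟩, -⟩, rfl⟩ := (NormalWord.equiv φ d).symm.surjective x
  rcases l with _ | ⟨⟨e, k⟩, l⟩
  · exact .inl ⟨h, by simp [NormalWord.equiv, NormalWord.ReducedWord.prod]⟩
  · obtain ⟨f, n, y, k', hy, hprod⟩ := exists_isBrittonReduced_of_isChain (φ := φ) e k l hl
    exact .inr ⟨h, k', e, f, n, y, hy, congrArg (of h * ·) hprod⟩

section Conjugates

variable {G : Subgroup (HNNExtension K A B φ)} {x y : HNNExtension K A B φ}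

theorem IsBrittonReduced.exists_conj_mul_of {e f : ℤˣ} {n : ℕ} (hy : IsBrittonReduced φ e f n y)
    (hK : ∀ k, of k ∈ G) (hKt : ∀ k, t⁻¹ * of k * t ∈ G) (hA : A ≠ ⊤) (hB : B ≠ ⊤)
    (hAB : A.index ≠ 2 ∨ B.index ≠ 2) (k : K) :
    ∃ g ∈ G, ∃ n', IsBrittonReduced φ (-1) 1 n' (g * (y * of k) * g⁻¹) := by
  obtain ⟨a, ha⟩ := SetLike.exists_not_mem_of_ne_top A hA rfl
  obtain ⟨c, hc⟩ := SetLike.exists_not_mem_of_ne_top B hB rfl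
  have conj_of {s : K} (hs : s ∈ A → e = 1) (hsk : k * s⁻¹ ∈ toSubgroup A B f → f = -1) :
      ∃ g ∈ G, ∃ n', IsBrittonReduced φ (-1) 1 n' (g * (y * of k) * g⁻¹) :=
    ⟨_, mul_mem (hKt c) (hK s), _, hy.conj hc hs hsk⟩
  rcases Int.units_eq_one_or f with rfl | rfl
  swap
  · exact conj_of (s := a) (fun h ↦ absurd h ha) (fun _ ↦ rfl)
  rcases Int.units_eq_one_or e with rfl | rfl
  · exact conj_of (s := a * k) (fun _ ↦ rfl) (fun h ↦ absurd h (by simpa using ha))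
  by_cases hk : A.index ≠ 2 ∨ k⁻¹ ∈ A
  · obtain ⟨s, hs, hsk⟩ := exists_notMem_mul_notMem hA hk
    refine conj_of (fun h ↦ absurd h hs) (fun h ↦ absurd ?_ hsk)
    simpa using inv_mem h
  · rw [inv_mem_iff, not_or] at hk
    -- No `s` works at both ends; but `t⁻¹ q t` can be applied directly: at the left end `t` cancels
    -- `t⁻¹` and `q` merges with the first syllable, at the right end `k ∉ A` blocks cancellation.
    obtain ⟨e', n', p, z, -, hz, rfl⟩ := hy.exists_eq_of_ne (by decide)
    obtain ⟨q, hq, hqp⟩ := exists_notMem_mul_notMem hB (.inl (hAB.resolve_left hk.1)) (p := p)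
    refine ⟨t⁻¹ * of q * t, hKt q, n' + 1 + 2, ?_⟩
    have hleft : IsBrittonReduced φ (-1) 1 _ (t ^ (-1 : ℤ) * of (q * p) * z) :=
      .t_zpow_mul (e := -1) (fun h ↦ absurd h hqp) hz
    convert hleft.mul_of_mul_inv (k := k) (fun h ↦ absurd h hk.2) hq using 1
    simp only [map_mul, Units.val_neg, Units.val_one]
    group

theorem exists_conj_isBrittonReduced (hK : ∀ k, of k ∈ G) (hKt : ∀ k, t⁻¹ * of k * t ∈ G)
    (hA : A ≠ ⊤) (hB : B ≠ ⊤) (hAB : A.index ≠ 2 ∨ B.index ≠ 2) (hx : x ∉ A.map of) :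
    ∃ g ∈ G, ∃ n, IsBrittonReduced φ (-1) 1 n (g * x * g⁻¹) := by
  rcases mem_range_of_or_exists_isBrittonReduced x with ⟨k, rfl⟩ | ⟨h, k, e, f, n, y, hy, rfl⟩
  · have hk : k ∉ A := fun hk ↦ hx ⟨k, hk, rfl⟩
    obtain ⟨c, hc⟩ := SetLike.exists_not_mem_of_ne_top B hB rfl
    have hleft := IsBrittonReduced.inv_t_mul_of_mul_t (φ := φ) hc
    exact ⟨_, hKt c, _, hleft.mul_of_mul_inv (fun h ↦ absurd h hk) hc⟩
  · obtain ⟨g, hg, n', hn'⟩ := hy.exists_conj_mul_of hK hKt hA hB hAB (k * h)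
    refine ⟨g * (of h)⁻¹, mul_mem hg (inv_mem (hK h)), n', ?_⟩
    convert hn' using 1
    rw [map_mul]
    group

theorem infinite_conjugates_of_notMem_map_of (hK : ∀ k, of k ∈ G)
    (hKt : ∀ k, t⁻¹ * of k * t ∈ G) (hA : A ≠ ⊤) (hB : B ≠ ⊤)
    (hAB : A.index ≠ 2 ∨ B.index ≠ 2) (hx : x ∉ A.map of) :
    {z | ∃ g ∈ G, z = g * x * g⁻¹}.Infinite := by
  obtain ⟨g, hg, n, hn⟩ := exists_conj_isBrittonReduced hK hKt hA hB hAB hx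
  obtain ⟨a, ha⟩ := SetLike.exists_not_mem_of_ne_top A hA rfl
  obtain ⟨c, hc⟩ := SetLike.exists_not_mem_of_ne_top B hB rfl
  have hreduced := hn.conj_pow ha hc
  refine Set.infinite_of_injective_forall_mem (α := ℕ)
    (f := fun j ↦ (t⁻¹ * of c * t * of a) ^ j * (g * x * g⁻¹) *
      ((t⁻¹ * of c * t * of a) ^ j)⁻¹) (fun i j hij ↦ ?_) (fun j ↦ ?_)
  · have hlength := (hreduced i).length_unique (by simpa only [hij] using hreduced j)
    omega
  · exact ⟨(t⁻¹ * of c * t * of a) ^ j * g,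
      mul_mem (pow_mem (mul_mem (hKt c) (hK a)) j) hg, by group⟩

end Conjugates

end HNNExtension

section RangeEquiv

variable {E K : Type*} [Group E] [Group K] {i j : E →* K}

/-- The isomorphism `i x ↦ j x` between the images of two embeddings of the same group. -/
noncomputable def rangeEquivRange (hi : Function.Injective i) (hj : Function.Injective j) :
    i.range ≃* j.range :=
  (MonoidHom.ofInjective hi).symm.trans (MonoidHom.ofInjective hj)

theorem rangeEquivRange_apply (hi : Function.Injective i) (hj : Function.Injective j) (x : E) :
    (rangeEquivRange hi hj (i.rangeRestrict x) : K) = j x := by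
  have hx : (MonoidHom.ofInjective hi).symm (i.rangeRestrict x) = x :=
    (MonoidHom.ofInjective hi).symm_apply_apply x
  rw [rangeEquivRange, MulEquiv.trans_apply, hx, MonoidHom.ofInjective_apply]

end RangeEquiv

/-- Multiplication by `n` on `ℤ`, with `ℤ` written multiplicatively as in the base of an
`HNNExtension`. -/
abbrev intMul (n : ℤ) : Multiplicative ℤ →* Multiplicative ℤ := zpowGroupHom n

theorem intMul_injective {n : ℤ} (hn : n ≠ 0) : Function.Injective (intMul n) :=
  zpow_left_injective hn

theorem index_range_intMul (n : ℤ) : (intMul n).range.index = n.natAbs := by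
  have hrange : (intMul n).range = AddSubgroup.toSubgroup (AddSubgroup.zmultiples n) := by
    ext x
    simp [AddSubgroup.mem_zmultiples_iff, mul_comm, ← toAdd.injective.eq_iff,
      Multiplicative.exists]
  rw [hrange, AddSubgroup.index_toSubgroup, Int.index_zmultiples]

namespace BS

variable {n m : ℤ}

theorem semiconjBy_b : SemiconjBy (b n m) (a n m ^ n) (a n m ^ m) := by
  have hrel : b n m * a n m ^ n * (b n m)⁻¹ * a n m ^ (-m) = 1 :=
    PresentedGroup.one_of_mem (Set.mem_singleton _)
  rwa [zpow_neg, mul_inv_eq_one, mul_inv_eq_iff_eq_mul] at hrel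

/-- The identification `nk ↦ mk` of `nℤ` with `mℤ` imposed by the relator of `BS(n, m)`. -/
noncomputable abbrev rangeIntMulEquiv (hn : n ≠ 0) (hm : m ≠ 0) :
    (intMul n).range ≃* (intMul m).range :=
  rangeEquivRange (intMul_injective hn) (intMul_injective hm)

/-- The HNN extension of `ℤ` along `rangeIntMulEquiv`, whose stable letter plays the role of `b`. -/
abbrev HNN (hn : n ≠ 0) (hm : m ≠ 0) : Type :=
  HNNExtension (Multiplicative ℤ) _ _ (rangeIntMulEquiv hn hm)

variable (hn : n ≠ 0) (hm : m ≠ 0)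

/-- The canonical map from `BS(n, m)` to the HNN extension, `a ↦ 1 ∈ ℤ` and `b ↦ t`. -/
noncomputable def toHNN : BS n m →* HNN hn hm :=
  PresentedGroup.toGroup (f := fun c ↦ if c then t else of (ofAdd 1)) (by
    rintro _ rfl
    have hconj := equiv_eq_conj (φ := rangeIntMulEquiv hn hm) (MonoidHom.rangeRestrict _ (ofAdd 1))
    rw [rangeEquivRange_apply] at hconj
    simpa [mul_inv_eq_one] using hconj.symm)

@[simp]
theorem toHNN_a : toHNN hn hm (a n m) = of (ofAdd 1) := by simp [toHNN, a]

@[simp]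
theorem toHNN_b : toHNN hn hm (b n m) = t := by simp [toHNN, b]

/-- The map from the HNN extension to `BS(n, m)`, `k ↦ a^k` and `t ↦ b`. -/
noncomputable def ofHNN : HNN hn hm →* BS n m :=
  HNNExtension.lift (zpowersHom _ (a n m)) (b n m) (by
    intro x
    obtain ⟨y, rfl⟩ := MonoidHom.rangeRestrict_surjective _ x
    rw [rangeEquivRange_apply]
    simpa [zpow_mul, SemiconjBy] using (semiconjBy_b (n := n) (m := m)).zpow_right (toAdd y))

/-- `BS(n, m)` is the HNN extension of `ℤ` identifying `nℤ` with `mℤ`. -/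
noncomputable def equivHNN : BS n m ≃* HNN hn hm :=
  (toHNN hn hm).toMulEquiv (ofHNN hn hm)
    (PresentedGroup.ext fun c ↦ by cases c <;> simp [toHNN, ofHNN, a, b, PresentedGroup.toGroup.of])
    (hom_ext (MonoidHom.ext_mint (by simp [ofHNN])) (by simp [ofHNN]))

theorem zpow_a_mem_closure (k : ℤ) :
    a n m ^ k ∈ Subgroup.closure {a n m, (b n m)⁻¹ * a n m * b n m} :=
  zpow_mem (Subgroup.subset_closure (Set.mem_insert _ _)) k

theorem inv_b_mul_zpow_a_mul_b_mem_closure (k : ℤ) :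
    (b n m)⁻¹ * a n m ^ k * b n m ∈ Subgroup.closure {a n m, (b n m)⁻¹ * a n m * b n m} := by
  have hmem := zpow_mem (Subgroup.subset_closure (Set.mem_insert_of_mem (a n m)
    (Set.mem_singleton ((b n m)⁻¹ * a n m * b n m)))) k
  have hconj := conj_zpow (i := k) (a := (b n m)⁻¹) (b := a n m)
  rw [inv_inv] at hconj
  rwa [hconj] at hmem

theorem equivHNN_zpow_a (k : ℤ) : equivHNN hn hm (a n m ^ k) = of (ofAdd k) := by
  have ha : equivHNN hn hm (a n m) = of (ofAdd 1) := toHNN_a hn hm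
  rw [map_zpow, ha, ← map_zpow, ← ofAdd_zsmul, smul_eq_mul, mul_one]

theorem equivHNN_b : equivHNN hn hm (b n m) = t := toHNN_b hn hm

theorem equivHNN_notMem_map_of {γ : BS n m} (hγ : γ ∉ Subgroup.zpowers (a n m ^ n)) :
    equivHNN hn hm γ ∉ (intMul n).range.map of := by
  rintro ⟨_, ⟨k, rfl⟩, hk⟩
  refine hγ ⟨toAdd k, (equivHNN hn hm).injective ?_⟩
  dsimp only
  rw [← hk, ← zpow_mul, equivHNN_zpow_a, zpowGroupHom_apply, ← smul_eq_mul, ofAdd_zsmul,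
    ofAdd_toAdd]

end BS

theorem BS_conjugates_infinite_general (n m : ℤ) (hn : 2 ≤ |n|) (hm : 2 ≤ |m|)
    (hnm : |n| ≠ 2 ∨ |m| ≠ 2) (γ : BS n m) (hγ : γ ∉ Subgroup.zpowers (BS.a n m ^ n)) :
    {x : BS n m |
      ∃ g ∈ Subgroup.closure {BS.a n m, (BS.b n m)⁻¹ * BS.a n m * BS.b n m},
        x = g * γ * g⁻¹}.Infinite := by
  simp only [Int.abs_eq_natAbs] at hn hm hnm
  have hn0 : n ≠ 0 := by omega
  have hm0 : m ≠ 0 := by omega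
  let G := Subgroup.closure {BS.a n m, (BS.b n m)⁻¹ * BS.a n m * BS.b n m}
  let e := BS.equivHNN hn0 hm0
  have hK (k : Multiplicative ℤ) : of k ∈ G.map e.toMonoidHom :=
    ⟨_, BS.zpow_a_mem_closure (toAdd k), BS.equivHNN_zpow_a hn0 hm0 (toAdd k)⟩
  have hKt (k : Multiplicative ℤ) : t⁻¹ * of k * t ∈ G.map e.toMonoidHom :=
    ⟨_, BS.inv_b_mul_zpow_a_mul_b_mem_closure (toAdd k), by
      simp [e, BS.equivHNN_zpow_a, BS.equivHNN_b, -map_zpow]⟩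
  have hinf := infinite_conjugates_of_notMem_map_of hK hKt
    (by rw [Ne, ← Subgroup.index_eq_one, index_range_intMul]; omega)
    (by rw [Ne, ← Subgroup.index_eq_one, index_range_intMul]; omega)
    (by simp only [index_range_intMul]; omega)
    (BS.equivHNN_notMem_map_of hn0 hm0 hγ)
  refine Set.Infinite.of_image e (hinf.mono ?_)
  rintro _ ⟨_, ⟨g, hg, rfl⟩, rfl⟩
  exact ⟨g * γ * g⁻¹, ⟨g, hg, rfl⟩, by simp [e]⟩

/-- For `2 ≤ n < |m|` and `G = ⟨a, b⁻¹ a b⟩ ≤ BS(n,m)`, every `γ ∈ BS(n,m)` lying outside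
`{a^{nk} : k ∈ ℤ}` has infinitely many conjugates `g γ g⁻¹` with `g ∈ G`. -/
theorem BS_conjugates_infinite (n m : ℤ) (h1 : 2 ≤ n) (h2 : n < |m|)
    (γ : BS n m) (hγ : γ ∉ Subgroup.zpowers (BS.a n m ^ n)) :
    {x : BS n m |
      ∃ g ∈ Subgroup.closure {BS.a n m, (BS.b n m)⁻¹ * BS.a n m * BS.b n m},
        x = g * γ * g⁻¹}.Infinite :=
  BS_conjugates_infinite_general n m (h1.trans (le_abs_self n)) (by omega) (.inr (by omega)) γ hγ
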